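/- arXiv:2303.16188 — 2 statements merged into one kernel-verified Lean document; each statement's English description precedes it below -/
import Mathlib

section
/- Let A, G be d×d symmetric positive-definite matrices with G ⪰ A and μI_d ⪯ A ⪯ LI_d for some 0 < μ ≤ L, and let U ∈ ℝ^{d×k} have i.i.d. N(0,1) entries. For the block BFGS update G₊ = G − GU(UᵀGU)⁻¹UᵀG + AU(UᵀAU)⁻¹UᵀA, it holds that E[tr(A⁻¹(G₊ − A))] ≤ (1 − k/(dκ))·tr(A⁻¹(G − A)), where κ = L/μ. -/
open Matrix MeasureTheory ProbabilityTheory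

/-!
Write `R = G - A`, `C = UᵀGU`, `D = UᵀAU`, and `P = U(UᵀU)⁻¹Uᵀ` for the orthogonal projection onto
the range of `U`. When `U` has full column rank, `σ_A(G₊) = σ_A(G) - (tr(C⁻¹UᵀGA⁻¹GU) - k)`.
Completing the square gives `UᵀGA⁻¹GU ⪰ C D⁻¹ C`, so the bracket is at least
`tr(D⁻¹C) - k = tr(D⁻¹ UᵀRU)`. Since `D ⪯ L UᵀU`, inversion being antitone, this is at least
`L⁻¹ tr((UᵀU)⁻¹UᵀRU) = L⁻¹ tr(PR)` (`blockBFGS_pointwise`).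

The law of `U` is invariant under sign changes and permutations of the rows, and these conjugate `P`
by the corresponding matrices. Hence the off-diagonal entries of `E[P]` vanish and its diagonal
entries agree; as `tr P = k` almost surely, `E[P] = (k/d) I` and `E[tr(PR)] = (k/d) tr R`
(`integral_trace_rangeProj_mul`). Finally `A ⪰ μI` gives `tr R ≥ μ tr(A⁻¹R)`.

Full column rank holds almost surely because the determinant of the top `k × k` block, restricted to
any line in the direction of the identity block, is up to sign a characteristic polynomial, which
has finitely many roots; so it is nonzero Lebesgue-almost everywhere.

Integrability of `σ_A(G₊)` is not needed: otherwise its Bochner integral is `0`, while the right-hand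
side is nonnegative because `k ≤ d` and `L/μ ≥ 1`.
-/

/-! ### Positive semidefinite matrices -/

open scoped MatrixOrder in
theorem posSemidef_trace_mul_nonneg {n : ℕ} {X Y : Matrix (Fin n) (Fin n) ℝ}
    (hX : X.PosSemidef) (hY : Y.PosSemidef) : 0 ≤ (X * Y).trace := by
  obtain ⟨B, rfl⟩ := CStarAlgebra.nonneg_iff_eq_star_mul_self.mp
    (show (0 : Matrix (Fin n) (Fin n) ℝ) ≤ X from hX.nonneg)
  have h := (hY.mul_mul_conjTranspose_same B).trace_nonneg
  rwa [Matrix.trace_mul_comm, ← Matrix.mul_assoc] at h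

/-- Inversion is antitone for the Loewner order on positive definite matrices, since
`X⁻¹ - Y⁻¹ = Y⁻¹(Y - X)Y⁻¹ + (X⁻¹ - Y⁻¹)X(X⁻¹ - Y⁻¹)`. -/
theorem posSemidef_inv_sub_inv {n : ℕ} {X Y : Matrix (Fin n) (Fin n) ℝ}
    (hX : X.PosDef) (hY : Y.PosDef) (h : (Y - X).PosSemidef) : (X⁻¹ - Y⁻¹).PosSemidef := by
  have hXu := (Matrix.isUnit_iff_isUnit_det _).1 hX.isUnit
  have hYu := (Matrix.isUnit_iff_isUnit_det _).1 hY.isUnit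
  have h1 := h.conjTranspose_mul_mul_same Y⁻¹
  have h2 := hX.posSemidef.conjTranspose_mul_mul_same (X⁻¹ - Y⁻¹)
  have e : X⁻¹ - Y⁻¹ = (Y⁻¹)ᴴ * (Y - X) * Y⁻¹ + (X⁻¹ - Y⁻¹)ᴴ * X * (X⁻¹ - Y⁻¹) := by
    rw [(hX.inv.isHermitian.sub hY.inv.isHermitian).eq, hY.inv.isHermitian.eq]
    simp only [Matrix.mul_sub, Matrix.sub_mul, Matrix.nonsing_inv_mul _ hXu,
      Matrix.nonsing_inv_mul _ hYu, Matrix.one_mul, Matrix.mul_nonsing_inv_cancel_right _ _ hXu]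
    abel
  rw [e]
  exact h1.add h2

/-! ### Gaussian matrices and full column rank -/

theorem measurePi_absolutelyContinuous {n : ℕ} {α : Type*} [MeasurableSpace α] {μ ν : Measure α}
    [SigmaFinite μ] [SigmaFinite ν] (h : μ ≪ ν) :
    Measure.pi (fun _ : Fin n => μ) ≪ Measure.pi (fun _ : Fin n => ν) := by
  induction n with
  | zero => rw [Measure.pi_of_empty, Measure.pi_of_empty]
  | succ n ih =>
    have e1 := ((measurePreserving_piFinSuccAbove (fun _ : Fin (n + 1) => μ) 0).symm).map_eq
    have e2 := ((measurePreserving_piFinSuccAbove (fun _ : Fin (n + 1) => ν) 0).symm).map_eq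
    rw [← e1, ← e2]
    exact (h.prod ih).map (MeasurableEquiv.measurable _)

/-- The law of a `d × k` matrix with i.i.d. standard normal entries, on the type of iterated
functions, which carries the product σ-algebra (`Matrix` has no `MeasurableSpace` instance). -/
noncomputable def gaussianMatrix (d k : ℕ) : Measure (Fin d → Fin k → ℝ) :=
  Measure.pi fun _ : Fin d => Measure.pi fun _ : Fin k => gaussianReal 0 1

instance (d k : ℕ) : IsProbabilityMeasure (gaussianMatrix d k) := by
  unfold gaussianMatrix; infer_instance

theorem gaussianMatrix_absolutelyContinuous (d k : ℕ) :
    gaussianMatrix d k ≪ volume :=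
  measurePi_absolutelyContinuous (measurePi_absolutelyContinuous
    (gaussianReal_absolutelyContinuous 0 one_ne_zero))

/-- A Gaussian matrix with at least as many rows as columns almost surely has full column rank. -/
theorem ae_mulVec_injective {d k : ℕ} (hk : k ≤ d) :
    ∀ᵐ M ∂gaussianMatrix d k, Function.Injective (Matrix.of M).mulVec := by
  let top : (Fin d → Fin k → ℝ) → Matrix (Fin k) (Fin k) ℝ := fun M =>
    Matrix.of fun i j => M (Fin.castLE hk i) j
  let V : Fin d → Fin k → ℝ := fun i j => if i = Fin.castLE hk j then 1 else 0
  have hcont : Continuous fun M => (top M).det := by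
    apply Continuous.matrix_det
    fun_prop
  have hmeas : MeasurableSet {M | (top M).det ≠ 0} :=
    (isOpen_ne.preimage hcont).measurableSet
  have hvol : ∀ᵐ M : Fin d → Fin k → ℝ, M ∈ {M | (top M).det ≠ 0} := by
    refine ae_mem_of_ae_add_linearMap_mem (LinearMap.toSpanSingleton ℝ _ V) volume volume hmeas ?_
    intro M
    -- As a function of `t`, `det (top M + t)` is the characteristic polynomial of `-top M`.
    have hfin : {t : ℝ | (top M + t • 1).det = 0}.Finite := by
      refine ((-top M).charpoly.rootSet_finite ℝ).subset fun t ht => ?_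
      rw [Polynomial.mem_rootSet_of_ne (Matrix.charpoly_monic _).ne_zero]
      simp only [Set.mem_ofPred_eq] at ht
      simp only [Polynomial.coe_aeval_eq_eval, Matrix.eval_charpoly]
      rw [← ht, sub_neg_eq_add, add_comm, smul_one_eq_diagonal, Matrix.scalar_apply]
    filter_upwards [hfin.countable.ae_notMem volume] with t ht
    have e : top (M + t • V) = top M + t • 1 := by
      ext i j
      simp [top, V, Matrix.one_apply]
    simpa [e] using ht
  filter_upwards [(gaussianMatrix_absolutelyContinuous d k).ae_le hvol] with M hM
  intro x y hxy
  have hu : IsUnit (top M) := (Matrix.isUnit_iff_isUnit_det _).2 (isUnit_iff_ne_zero.2 hM)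
  refine Matrix.mulVec_injective_iff_isUnit.2 hu ?_
  ext i
  exact congrFun hxy (Fin.castLE hk i)

/-! ### The one-step decrease for a fixed direction matrix -/

/-- The orthogonal projection `U(UᵀU)⁻¹Uᵀ` onto the range of `U`, for `U` of full column rank.
Otherwise the inverse is `0` by convention, and so is `rangeProj U`. -/
noncomputable def rangeProj {d k : ℕ} (U : Matrix (Fin d) (Fin k) ℝ) : Matrix (Fin d) (Fin d) ℝ :=
  U * (Uᵀ * U)⁻¹ * Uᵀ

theorem posDef_transpose_mul_mul {d k : ℕ} {B : Matrix (Fin d) (Fin d) ℝ} (hB : B.PosDef)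
    {U : Matrix (Fin d) (Fin k) ℝ} (hU : Function.Injective U.mulVec) : (Uᵀ * B * U).PosDef := by
  simpa using hB.conjTranspose_mul_mul_same hU

/-- The decrease of `σ_A` for a fixed direction matrix `U` of full column rank. -/
theorem blockBFGS_pointwise {d k : ℕ} {A G : Matrix (Fin d) (Fin d) ℝ}
    (hA : A.PosDef) (hG : G.PosDef) (hGA : (G - A).PosSemidef) {L : ℝ} (hL : 0 < L)
    (hAL : (L • (1 : Matrix (Fin d) (Fin d) ℝ) - A).PosSemidef)
    {U : Matrix (Fin d) (Fin k) ℝ} (hU : Function.Injective U.mulVec) :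
    (A⁻¹ * ((G - G * U * (Uᵀ * G * U)⁻¹ * Uᵀ * G + A * U * (Uᵀ * A * U)⁻¹ * Uᵀ * A) - A)).trace ≤
      (A⁻¹ * (G - A)).trace - L⁻¹ * (rangeProj U * (G - A)).trace := by
  have hC := posDef_transpose_mul_mul hG hU
  have hD := posDef_transpose_mul_mul hA hU
  have hE : (Uᵀ * U).PosDef := by simpa using posDef_transpose_mul_mul PosDef.one hU
  have hLE : (L • (Uᵀ * U)).PosDef := hE.smul hL
  have hAu := (Matrix.isUnit_iff_isUnit_det _).1 hA.isUnit
  have hCu := (Matrix.isUnit_iff_isUnit_det _).1 hC.isUnit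
  have hDu := (Matrix.isUnit_iff_isUnit_det _).1 hD.isUnit
  have hEu := (Matrix.isUnit_iff_isUnit_det _).1 hE.isUnit
  have hAt : Aᵀ = A := by simpa using hA.isHermitian.eq
  have hGt : Gᵀ = G := by simpa using hG.isHermitian.eq
  set C := Uᵀ * G * U with hCdef
  set D := Uᵀ * A * U with hDdef
  have hCt : Cᵀ = C := by simpa using hC.isHermitian.eq
  have hDt : Dᵀ = D := by simpa using hD.isHermitian.eq
  -- The matrix below is `Wᵀ A⁻¹ W` for `W = GU - A U D⁻¹ C`.
  have key1 : (Uᵀ * G * A⁻¹ * G * U - C * D⁻¹ * C).PosSemidef := by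
    have h := hA.inv.posSemidef.conjTranspose_mul_mul_same (G * U - A * U * D⁻¹ * C)
    rw [conjTranspose_eq_transpose_of_trivial] at h
    simp only [Matrix.transpose_sub, Matrix.transpose_mul, hAt, hGt, hCt,
      Matrix.transpose_nonsing_inv, hDt] at h
    have e1 : C * (D⁻¹ * (Uᵀ * A)) * A⁻¹ * (G * U) = C * D⁻¹ * C := by
      rw [hCdef]
      simp only [Matrix.mul_assoc, Matrix.mul_nonsing_inv_cancel_left _ _ hAu]
    have e2 : Uᵀ * G * A⁻¹ * (A * U * D⁻¹ * C) = C * D⁻¹ * C := by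
      rw [hCdef]
      simp only [Matrix.mul_assoc, Matrix.nonsing_inv_mul_cancel_left _ _ hAu]
    have e3 : C * (D⁻¹ * (Uᵀ * A)) * A⁻¹ * (A * U * D⁻¹ * C) = C * D⁻¹ * C := by
      have : C * (D⁻¹ * (Uᵀ * A)) * A⁻¹ * (A * U * D⁻¹ * C) = C * (D⁻¹ * (D * (D⁻¹ * C))) := by
        rw [hDdef]
        simp only [Matrix.mul_assoc, Matrix.nonsing_inv_mul_cancel_left _ _ hAu]
      rw [this, Matrix.nonsing_inv_mul_cancel_left _ _ hDu]
      exact (Matrix.mul_assoc _ _ _).symm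
    rw [Matrix.sub_mul, Matrix.sub_mul, Matrix.mul_sub, Matrix.mul_sub, e1, e2, e3,
      sub_self, sub_zero] at h
    simpa only [Matrix.mul_assoc] using h
  have key2 : (D⁻¹ - (L • (Uᵀ * U))⁻¹).PosSemidef := by
    refine posSemidef_inv_sub_inv hD hLE ?_
    have h := hAL.conjTranspose_mul_mul_same U
    simpa [Matrix.mul_sub, Matrix.sub_mul] using h
  have t1 := posSemidef_trace_mul_nonneg hC.inv.posSemidef key1
  have t2 := posSemidef_trace_mul_nonneg key2 (hGA.conjTranspose_mul_mul_same U)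
  have hinv : (L • (Uᵀ * U))⁻¹ = L⁻¹ • (Uᵀ * U)⁻¹ := by
    have : Invertible L := invertibleOfNonzero hL.ne'
    rw [Matrix.inv_smul _ _ hEu, invOf_eq_inv]
  have s1 : (A⁻¹ * (G * U * C⁻¹ * Uᵀ * G)).trace = (C⁻¹ * (Uᵀ * G * A⁻¹ * G * U)).trace := by
    rw [show A⁻¹ * (G * U * C⁻¹ * Uᵀ * G) = (A⁻¹ * G * U) * (C⁻¹ * Uᵀ * G) by
      simp only [Matrix.mul_assoc], Matrix.trace_mul_comm]
    simp only [Matrix.mul_assoc]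
  have s2 : (A⁻¹ * (A * U * D⁻¹ * Uᵀ * A)).trace = (D⁻¹ * D).trace := by
    rw [show A⁻¹ * (A * U * D⁻¹ * Uᵀ * A) = U * (D⁻¹ * Uᵀ * A) by
      simp only [Matrix.mul_assoc, Matrix.nonsing_inv_mul_cancel_left _ _ hAu],
      Matrix.trace_mul_comm, hDdef]
    simp only [Matrix.mul_assoc]
  have s3 : (C⁻¹ * (C * D⁻¹ * C)).trace = (D⁻¹ * C).trace := by
    simp only [Matrix.mul_assoc, Matrix.nonsing_inv_mul_cancel_left _ _ hCu]
  have s4 : (rangeProj U * (G - A)).trace = ((Uᵀ * U)⁻¹ * (Uᵀ * (G - A) * U)).trace := by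
    rw [rangeProj, Matrix.mul_assoc, Matrix.mul_assoc, Matrix.trace_mul_comm]
    simp only [Matrix.mul_assoc]
  have s5 : Uᵀ * (G - A) * U = C - D := by
    rw [Matrix.mul_sub, Matrix.sub_mul]
  rw [Matrix.mul_sub, Matrix.trace_sub, s3] at t1
  rw [conjTranspose_eq_transpose_of_trivial, hinv, Matrix.sub_mul, Matrix.trace_sub,
    Matrix.smul_mul, Matrix.trace_smul, ← s4, s5, Matrix.mul_sub, Matrix.trace_sub,
    smul_eq_mul] at t2
  rw [show G - G * U * C⁻¹ * Uᵀ * G + A * U * D⁻¹ * Uᵀ * A - A =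
    (G - A) - G * U * C⁻¹ * Uᵀ * G + A * U * D⁻¹ * Uᵀ * A by abel, Matrix.mul_add,
    Matrix.mul_sub (A⁻¹) (G - A), Matrix.trace_add, Matrix.trace_sub, s1, s2]
  linarith

/-! ### Algebra of the range projection -/

theorem rangeProj_transpose {d k : ℕ} (U : Matrix (Fin d) (Fin k) ℝ) :
    (rangeProj U)ᵀ = rangeProj U := by
  simp [rangeProj, Matrix.transpose_nonsing_inv, Matrix.mul_assoc]

theorem rangeProj_mul_self {d k : ℕ} (U : Matrix (Fin d) (Fin k) ℝ) :
    rangeProj U * rangeProj U = rangeProj U := by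
  by_cases h : IsUnit (Uᵀ * U).det
  · have : rangeProj U * rangeProj U =
        U * ((Uᵀ * U)⁻¹ * ((Uᵀ * U) * ((Uᵀ * U)⁻¹ * Uᵀ))) := by
      simp only [rangeProj, Matrix.mul_assoc]
    rw [this, Matrix.nonsing_inv_mul_cancel_left _ _ h, rangeProj, Matrix.mul_assoc]
  · simp [rangeProj, Matrix.nonsing_inv_apply_not_isUnit _ h]

/-- As `P` is a symmetric idempotent, `∑ j, P i j ^ 2 = P i i`, which bounds all entries by `1`. -/
theorem abs_rangeProj_apply_le_one {d k : ℕ} (U : Matrix (Fin d) (Fin k) ℝ) (i j : Fin d) :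
    |rangeProj U i j| ≤ 1 := by
  have hd (j : Fin d) : rangeProj U i j ^ 2 ≤ rangeProj U i i := by
    conv_rhs => rw [← rangeProj_mul_self, Matrix.mul_apply]
    have h (l : Fin d) : rangeProj U i l * rangeProj U l i = rangeProj U i l ^ 2 := by
      conv_lhs => rw [← rangeProj_transpose U, Matrix.transpose_apply, Matrix.transpose_apply]
      rw [← Matrix.transpose_apply (rangeProj U), rangeProj_transpose]
      ring
    simp only [h]
    exact Finset.single_le_sum (f := fun l => rangeProj U i l ^ 2) (fun _ _ => sq_nonneg _)
      (Finset.mem_univ j)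
  have h1 := hd i
  have h2 := hd j
  rw [← sq_le_one_iff_abs_le_one]
  nlinarith

theorem trace_rangeProj {d k : ℕ} {U : Matrix (Fin d) (Fin k) ℝ}
    (hU : Function.Injective U.mulVec) : (rangeProj U).trace = k := by
  have hE : (Uᵀ * U).PosDef := by simpa using posDef_transpose_mul_mul PosDef.one hU
  have hEu := (Matrix.isUnit_iff_isUnit_det _).1 hE.isUnit
  rw [rangeProj, Matrix.trace_mul_comm, ← Matrix.mul_assoc, Matrix.mul_nonsing_inv _ hEu]
  simp

theorem rangeProj_submatrix {d k : ℕ} (U : Matrix (Fin d) (Fin k) ℝ) (e : Fin d ≃ Fin d) :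
    rangeProj (U.submatrix e id) = (rangeProj U).submatrix e e := by
  have : (U.submatrix e id)ᵀ * U.submatrix e id = Uᵀ * U := by
    rw [Matrix.transpose_submatrix, Matrix.submatrix_mul_equiv, Matrix.submatrix_id_id]
  rw [rangeProj, this]
  ext i j
  simp [rangeProj, Matrix.mul_apply]

theorem rangeProj_diagonal_mul {d k : ℕ} (U : Matrix (Fin d) (Fin k) ℝ) {s : Fin d → ℝ}
    (hs : ∀ i, s i * s i = 1) :
    rangeProj (diagonal s * U) = diagonal s * rangeProj U * diagonal s := by
  have h1 : (diagonal s * U)ᵀ * (diagonal s * U) = Uᵀ * U := by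
    rw [Matrix.transpose_mul, Matrix.diagonal_transpose, Matrix.mul_assoc,
      ← Matrix.mul_assoc (diagonal s), Matrix.diagonal_mul_diagonal]
    simp [hs]
  rw [rangeProj, h1, rangeProj]
  simp only [Matrix.transpose_mul, Matrix.diagonal_transpose, Matrix.mul_assoc]

/-! ### The expected range projection -/

theorem measurable_rangeProj_apply {d k : ℕ} (i j : Fin d) :
    Measurable fun M : Fin d → Fin k → ℝ => rangeProj (Matrix.of M) i j := by
  have hE : Continuous fun M : Fin d → Fin k → ℝ => (Matrix.of M)ᵀ * Matrix.of M := by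
    apply Continuous.matrix_mul <;> fun_prop
  have hentry (a b : Fin k) : Measurable fun M : Fin d → Fin k → ℝ =>
      ((Matrix.of M)ᵀ * Matrix.of M)⁻¹ a b := by
    simp only [Matrix.inv_def, Ring.inverse_eq_inv', Matrix.smul_apply, smul_eq_mul]
    exact hE.matrix_det.measurable.inv.mul
      ((hE.matrix_adjugate.matrix_elem a b).measurable)
  have hexp : (fun M : Fin d → Fin k → ℝ => rangeProj (Matrix.of M) i j) = fun M =>
      ∑ b, (∑ a, M i a * ((Matrix.of M)ᵀ * Matrix.of M)⁻¹ a b) * M j b := rfl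
  have hrow (l : Fin d) (b : Fin k) : Measurable fun M : Fin d → Fin k → ℝ => M l b :=
    (measurable_pi_apply b).comp (measurable_pi_apply l)
  rw [hexp]
  exact Finset.measurable_fun_sum _ fun b _ => (Finset.measurable_fun_sum _ fun a _ =>
    (hrow i a).mul (hentry a b)).mul (hrow j b)

theorem integrable_rangeProj_apply {d k : ℕ} (i j : Fin d) :
    Integrable (fun M : Fin d → Fin k → ℝ => rangeProj (Matrix.of M) i j) (gaussianMatrix d k) :=
  Integrable.of_bound (measurable_rangeProj_apply i j).aestronglyMeasurable 1
    (Filter.Eventually.of_forall fun _ => abs_rangeProj_apply_le_one _ i j)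

theorem measurePreserving_signs {d k : ℕ} (i₀ : Fin d) :
    MeasurePreserving (fun (M : Fin d → Fin k → ℝ) i => if i = i₀ then -M i else M i)
      (gaussianMatrix d k) (gaussianMatrix d k) := by
  refine measurePreserving_pi (f := fun i (v : Fin k → ℝ) => if i = i₀ then -v else v) _ _
    fun i => ?_
  by_cases h : i = i₀
  · simp only [h, if_true]
    refine measurePreserving_pi (f := fun _ (x : ℝ) => -x) _ _ fun j => ⟨measurable_neg, ?_⟩
    rw [gaussianReal_map_neg, neg_zero]
  · simp only [h, if_false]
    exact MeasurePreserving.id _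

theorem measurePreserving_perm {d k : ℕ} (e : Fin d ≃ Fin d) :
    MeasurePreserving (fun (M : Fin d → Fin k → ℝ) i => M (e i))
      (gaussianMatrix d k) (gaussianMatrix d k) := by
  have h := measurePreserving_piCongrLeft
    (fun _ : Fin d => Measure.pi fun _ : Fin k => gaussianReal 0 1) e.symm
  suffices e : (fun (M : Fin d → Fin k → ℝ) i => M (e i)) =
      MeasurableEquiv.piCongrLeft (fun _ : Fin d => Fin k → ℝ) e.symm by
    rw [e]
    exact h
  ext M i j
  have := Equiv.piCongrLeft_apply_apply (P := fun _ : Fin d => Fin k → ℝ) (e := e.symm) M (e i)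
  simp only [Equiv.symm_apply_apply] at this
  rw [MeasurableEquiv.coe_piCongrLeft, this]

/-- Flipping the sign of row `i` preserves the law and negates `P i j`. -/
theorem integral_rangeProj_apply_ne {d k : ℕ} {i j : Fin d} (hij : i ≠ j) :
    ∫ M, rangeProj (Matrix.of M) i j ∂gaussianMatrix d k = 0 := by
  have hT := measurePreserving_signs (k := k) i
  have h := integral_map (μ := gaussianMatrix d k) hT.measurable.aemeasurable
    (measurable_rangeProj_apply (d := d) (k := k) i j).aestronglyMeasurable
  rw [hT.map_eq] at h
  have e (M : Fin d → Fin k → ℝ) :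
      rangeProj (Matrix.of fun l => if l = i then -M l else M l) i j =
        -rangeProj (Matrix.of M) i j := by
    have : (Matrix.of fun l => if l = i then -M l else M l) =
        diagonal (fun l => if l = i then (-1 : ℝ) else 1) * Matrix.of M := by
      ext a b
      by_cases ha : a = i <;> simp [ha]
    rw [this, rangeProj_diagonal_mul _ (fun l => by split_ifs <;> norm_num)]
    simp [hij.symm]
  simp only [e, integral_neg] at h
  linarith

/-- Swapping rows preserves the law, so the expected diagonal entries agree; they sum to `k`. -/
theorem integral_rangeProj_apply_self {d k : ℕ} (hk : k ≤ d) (i : Fin d) :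
    ∫ M, rangeProj (Matrix.of M) i i ∂gaussianMatrix d k = k / d := by
  have hsym (j : Fin d) : ∫ M, rangeProj (Matrix.of M) j j ∂gaussianMatrix d k =
      ∫ M, rangeProj (Matrix.of M) i i ∂gaussianMatrix d k := by
    have hT := measurePreserving_perm (k := k) (Equiv.swap i j)
    have h := integral_map (μ := gaussianMatrix d k) hT.measurable.aemeasurable
      (measurable_rangeProj_apply (d := d) (k := k) j j).aestronglyMeasurable
    rw [hT.map_eq] at h
    rw [h]
    congr 1 with M
    have := rangeProj_submatrix (Matrix.of M) (Equiv.swap i j)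
    calc _ = rangeProj ((Matrix.of M).submatrix (Equiv.swap i j) id) j j := rfl
      _ = _ := by rw [this]; simp
  have htr : ∑ j, ∫ M, rangeProj (Matrix.of M) j j ∂gaussianMatrix d k = k := by
    rw [← integral_finsetSum _ fun j _ => integrable_rangeProj_apply j j]
    have : (fun M : Fin d → Fin k → ℝ => ∑ j, rangeProj (Matrix.of M) j j)
        =ᵐ[gaussianMatrix d k] fun _ => (k : ℝ) := by
      filter_upwards [ae_mulVec_injective hk] with M hM using trace_rangeProj hM
    rw [integral_congr_ae this]
    simp
  simp only [hsym, Finset.sum_const, Finset.card_univ, Fintype.card_fin, nsmul_eq_mul] at htr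
  have hd : (d : ℝ) ≠ 0 := by
    have := i.pos
    positivity
  field_simp
  linarith

theorem integrable_trace_rangeProj_mul {d k : ℕ} (R : Matrix (Fin d) (Fin d) ℝ) :
    Integrable (fun M : Fin d → Fin k → ℝ => (rangeProj (Matrix.of M) * R).trace)
      (gaussianMatrix d k) := by
  simp only [Matrix.trace, Matrix.diag, Matrix.mul_apply]
  exact integrable_finsetSum _ fun i _ => integrable_finsetSum _ fun j _ =>
    (integrable_rangeProj_apply i j).mul_const _

theorem integral_trace_rangeProj_mul {d k : ℕ} (hk : k ≤ d) (R : Matrix (Fin d) (Fin d) ℝ) :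
    ∫ M, (rangeProj (Matrix.of M) * R).trace ∂gaussianMatrix d k = k / d * R.trace := by
  simp only [Matrix.trace, Matrix.diag, Matrix.mul_apply]
  rw [integral_finsetSum _ fun i _ => integrable_finsetSum _ fun j _ =>
    (integrable_rangeProj_apply i j).mul_const _, Finset.mul_sum]
  refine Finset.sum_congr rfl fun i _ => ?_
  rw [integral_finsetSum _ fun j _ => (integrable_rangeProj_apply i j).mul_const _,
    Finset.sum_eq_single i]
  · rw [integral_mul_const, integral_rangeProj_apply_self hk]
  · intro j _ hj
    rw [integral_mul_const, integral_rangeProj_apply_ne hj.symm, zero_mul]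
  · simp

/-! ### The expected decrease -/

theorem mul_trace_inv_mul_le {d : ℕ} {A R : Matrix (Fin d) (Fin d) ℝ} (hA : A.PosDef)
    (hR : R.PosSemidef) {μ : ℝ} (hμ : 0 < μ)
    (hAμ : (A - μ • (1 : Matrix (Fin d) (Fin d) ℝ)).PosSemidef) :
    μ * (A⁻¹ * R).trace ≤ R.trace := by
  have h1 : (μ • (1 : Matrix (Fin d) (Fin d) ℝ)).PosDef := PosDef.one.smul hμ
  have h := posSemidef_trace_mul_nonneg (posSemidef_inv_sub_inv h1 hA hAμ) hR
  have hinv : (μ • (1 : Matrix (Fin d) (Fin d) ℝ))⁻¹ = μ⁻¹ • 1 := by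
    have : Invertible μ := invertibleOfNonzero hμ.ne'
    rw [Matrix.inv_smul _ _ (by simp), invOf_eq_inv, inv_one]
  rw [hinv, Matrix.sub_mul, Matrix.trace_sub, Matrix.smul_mul, Matrix.one_mul, Matrix.trace_smul,
    smul_eq_mul] at h
  have := mul_nonneg hμ.le h
  rw [mul_sub, mul_inv_cancel_left₀ hμ.ne'] at this
  linarith

/-- **Theorem 5.3 (block BFGS part)**: for the randomized block BFGS update with
Gaussian directions, `E[σ_A(G₊)] ≤ (1 − k/(dκ))·σ_A(G)` where
`σ_A(G) = tr(A⁻¹(G − A))` and `κ = L/μ`. -/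
theorem blockBFGS_sigma_decrease {d k : ℕ} (hd : 0 < d) (hk : k ≤ d)
    (A G : Matrix (Fin d) (Fin d) ℝ) (hA : A.PosDef) (hG : G.PosDef)
    (hGA : (G - A).PosSemidef)
    (μ L : ℝ) (hμ : 0 < μ) (hμL : μ ≤ L)
    (hAμ : (A - μ • (1 : Matrix (Fin d) (Fin d) ℝ)).PosSemidef)
    (hAL : (L • (1 : Matrix (Fin d) (Fin d) ℝ) - A).PosSemidef)
    {Ω : Type*} [MeasureSpace Ω] [IsProbabilityMeasure (ℙ : Measure Ω)]
    (U : Ω → Matrix (Fin d) (Fin k) ℝ)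
    (hU : Measure.map (fun ω => fun i j => U ω i j) ℙ =
      Measure.pi fun _ : Fin d => Measure.pi fun _ : Fin k => gaussianReal 0 1) :
    (∫ ω,
        (A⁻¹ *
          ((G - G * U ω * ((U ω)ᵀ * G * U ω)⁻¹ * (U ω)ᵀ * G +
            A * U ω * ((U ω)ᵀ * A * U ω)⁻¹ * (U ω)ᵀ * A) - A)).trace ∂ℙ) ≤
      (1 - (k : ℝ) / (d * (L / μ))) * (A⁻¹ * (G - A)).trace := by
  have hL : 0 < L := hμ.trans_le hμL
  have hd' : (0 : ℝ) < d := by exact_mod_cast hd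
  have hσ : 0 ≤ (A⁻¹ * (G - A)).trace := posSemidef_trace_mul_nonneg hA.inv.posSemidef hGA
  by_cases hint : Integrable (fun ω => (A⁻¹ *
      ((G - G * U ω * ((U ω)ᵀ * G * U ω)⁻¹ * (U ω)ᵀ * G +
        A * U ω * ((U ω)ᵀ * A * U ω)⁻¹ * (U ω)ᵀ * A) - A)).trace) ℙ
  swap
  -- A non-integrable integrand has Bochner integral `0`, and the right-hand side is nonnegative.
  · rw [integral_undef hint]
    refine mul_nonneg (sub_nonneg.2 ?_) hσ
    rw [div_le_one (by positivity)]
    calc (k : ℝ) ≤ d * 1 := by rw [mul_one]; exact_mod_cast hk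
      _ ≤ d * (L / μ) := by gcongr; rwa [one_le_div hμ]
  change Measure.map (fun ω => fun i j => U ω i j) ℙ = gaussianMatrix d k at hU
  -- `Measure.map` along a map that is not a.e. measurable is `0`, not a probability measure.
  have hUm : AEMeasurable (fun ω => fun i j => U ω i j) (ℙ : Measure Ω) := by
    by_contra h
    rw [Measure.map_of_not_aemeasurable h] at hU
    exact IsProbabilityMeasure.ne_zero (gaussianMatrix d k) hU.symm
  have hinj : ∀ᵐ ω ∂(ℙ : Measure Ω), Function.Injective (U ω).mulVec := by
    have h := ae_mulVec_injective hk
    rw [← hU] at h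
    exact ae_of_ae_map hUm h
  have hgint := integrable_trace_rangeProj_mul (d := d) (k := k) (G - A)
  have hgval := integral_trace_rangeProj_mul hk (G - A)
  rw [← hU] at hgint hgval
  rw [integral_map hUm hgint.aestronglyMeasurable] at hgval
  have hgint' := hgint.comp_aemeasurable hUm
  have hle := integral_mono_ae hint ((integrable_const _).sub (hgint'.const_mul L⁻¹))
    (hinj.mono fun ω hω => blockBFGS_pointwise hA hG hGA hL hAL hω)
  refine hle.trans ?_
  simp only [Pi.sub_apply]
  rw [integral_sub (integrable_const _) (hgint'.const_mul L⁻¹), integral_const_mul]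
  simp only [Function.comp_def]
  rw [hgval]
  have hR := mul_trace_inv_mul_le hA hGA hμ hAμ
  have h2 : L⁻¹ * (k / d) * (μ * (A⁻¹ * (G - A)).trace) ≤ L⁻¹ * (k / d) * (G - A).trace := by
    gcongr
  have e : (k : ℝ) / (d * (L / μ)) = L⁻¹ * (k / d) * μ := by
    field_simp
  rw [e]
  simp only [integral_const, probReal_univ, smul_eq_mul, one_mul]
  linarith
end

section
/- Let A, G be d×d symmetric positive-definite matrices with G ⪰ A and μI_d ⪯ A ⪯ LI_d for some 0 < μ ≤ L, and let U ∈ ℝ^{d×k} have i.i.d. N(0,1) entries. For the block DFP update G₊ = AU(UᵀAU)⁻¹UᵀA + (I_d − AU(UᵀAU)⁻¹Uᵀ)G(I_d − U(UᵀAU)⁻¹UᵀA), it holds that E[tr(A⁻¹(G₊ − A))] ≤ (1 − k/(dκ))·tr(A⁻¹(G − A)), where κ = L/μ. -/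
/-!
Write `E = G - A ⪰ 0`, `M = Uᵀ A U` and `N = Uᵀ U`. When `M` is invertible, a direct computation
(`trace_blockDFP`) gives `σ_A(G₊) = tr (A⁻¹ E) - tr (E U M⁻¹ Uᵀ)`. Since `A ⪯ L I`, we have
`M ⪯ L N`, so inversion being antitone (`posSemidef_inv_sub_inv`) yields
`U M⁻¹ Uᵀ ⪰ L⁻¹ Π`, where `Π = U N⁻¹ Uᵀ` is the orthogonal projection onto the column space of `U`.

The expectation of `Π` is `(k / d) I`: the law of `U` is invariant under flipping the sign of one
row, which kills the off-diagonal entries, and under permuting the rows, which makes the diagonal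
entries equal; their sum is `tr Π = k`, because `N` is almost surely invertible
(`ae_gram_det_ne_zero`). Hence `E[σ_A(G₊)] ≤ tr (A⁻¹ E) - k / (d L) * tr E`, and `A ⪰ μ I` gives
`tr E ≥ μ tr (A⁻¹ E)`.

Integrability of `σ_A(G₊)` itself is never needed: it is nonnegative almost surely and dominated by
an integrable function, which suffices for the comparison of Bochner integrals.
-/

open Matrix MeasureTheory ProbabilityTheory

/-! ### Loewner order -/

/-- Both conditions say that the block matrix `[[S, B], [Bᵀ, T]]` is positive semidefinite, read
through its two Schur complements. -/
theorem posSemidef_schur_swap {m n : Type*} [Fintype m] [Fintype n] [DecidableEq m]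
    [DecidableEq n] {S : Matrix m m ℝ} {T : Matrix n n ℝ} (B : Matrix m n ℝ)
    (hS : S.PosDef) (hT : T.PosDef) :
    (T - Bᵀ * S⁻¹ * B).PosSemidef ↔ (S - B * T⁻¹ * Bᵀ).PosSemidef := by
  have := hS.isUnit.invertible
  have := hT.isUnit.invertible
  have h1 := PosDef.fromBlocks₁₁ B T hS
  have h2 := PosDef.fromBlocks₂₂ S B hT
  rw [conjTranspose_eq_transpose_of_trivial] at h1 h2
  exact h1.symm.trans h2

/-- Inversion is antitone in the Loewner order. -/
theorem posSemidef_inv_sub_inv_s10 {n : Type*} [Fintype n] [DecidableEq n] {S T : Matrix n n ℝ}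
    (hS : S.PosDef) (hT : T.PosDef) (h : (S - T).PosSemidef) : (T⁻¹ - S⁻¹).PosSemidef := by
  have hdet : IsUnit T.det := (isUnit_iff_isUnit_det T).1 hT.isUnit
  have := (posSemidef_schur_swap (S := S) (T := T⁻¹) 1 hS hT.inv).2
    (by simpa [nonsing_inv_nonsing_inv T hdet] using h)
  simpa using this

open scoped MatrixOrder in
theorem trace_mul_nonneg_of_posSemidef {n : Type*} [Fintype n] {X Y : Matrix n n ℝ}
    (hX : X.PosSemidef) (hY : Y.PosSemidef) : 0 ≤ (X * Y).trace := by
  classical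
  obtain ⟨C, rfl⟩ := CStarAlgebra.nonneg_iff_eq_star_mul_self.mp hX.nonneg
  rw [star_eq_conjTranspose]
  rw [Matrix.mul_assoc, trace_mul_comm]
  exact (hY.mul_mul_conjTranspose_same C).trace_nonneg

/-! ### The projection onto the column space -/

/-- The orthogonal projection `V (Vᵀ V)⁻¹ Vᵀ` onto the column space of a `d × k` matrix of full
column rank, given as a family of rows. It is `0` when `Vᵀ V` is singular, because the inverse is
then `0` by convention. -/
noncomputable def colProj {d k : ℕ} (V : Fin d → Fin k → ℝ) : Matrix (Fin d) (Fin d) ℝ :=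
  of V * ((of V)ᵀ * of V)⁻¹ * (of V)ᵀ

theorem colProj_apply {d k : ℕ} (V : Fin d → Fin k → ℝ) (i j : Fin d) :
    colProj V i j = ∑ b, (∑ a, V i a * ((of V)ᵀ * of V)⁻¹ a b) * V j b := by
  simp [colProj, Matrix.mul_apply]

theorem colProj_comp_perm {d k : ℕ} (V : Fin d → Fin k → ℝ) (σ : Equiv.Perm (Fin d))
    (i j : Fin d) : colProj (fun r => V (σ r)) i j = colProj V (σ i) (σ j) := by
  have h : (of fun r => V (σ r))ᵀ * (of fun r => V (σ r)) = (of V)ᵀ * of V := by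
    ext a b
    simp only [Matrix.mul_apply, transpose_apply, of_apply]
    exact Equiv.sum_comp σ fun r => V r a * V r b
  rw [colProj_apply, colProj_apply, h]

theorem colProj_sign {d k : ℕ} (V : Fin d → Fin k → ℝ) (s : Fin d → ℝ)
    (hs : ∀ r, s r * s r = 1) (i j : Fin d) :
    colProj (fun r c => s r * V r c) i j = s i * s j * colProj V i j := by
  have h : (of fun r c => s r * V r c)ᵀ * (of fun r c => s r * V r c) = (of V)ᵀ * of V := by
    ext a b
    simp only [Matrix.mul_apply, transpose_apply, of_apply]
    refine Finset.sum_congr rfl fun r _ => ?_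
    linear_combination V r a * V r b * hs r
  rw [colProj_apply, colProj_apply, h]
  simp only [Finset.sum_mul, Finset.mul_sum]
  refine Finset.sum_congr rfl fun b _ => Finset.sum_congr rfl fun a _ => ?_
  ring

theorem colProj_transpose {d k : ℕ} (V : Fin d → Fin k → ℝ) : (colProj V)ᵀ = colProj V := by
  simp [colProj, transpose_mul, transpose_nonsing_inv, Matrix.mul_assoc]

theorem colProj_mul_self {d k : ℕ} (V : Fin d → Fin k → ℝ) : colProj V * colProj V = colProj V := by
  by_cases h : IsUnit ((of V)ᵀ * of V).det
  · have : colProj V * colProj V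
        = of V * (((of V)ᵀ * of V)⁻¹ * ((of V)ᵀ * of V)) * ((of V)ᵀ * of V)⁻¹ * (of V)ᵀ := by
      simp only [colProj, Matrix.mul_assoc]
    rw [this, nonsing_inv_mul _ h, Matrix.mul_one, colProj]
  · simp [colProj, nonsing_inv_apply_not_isUnit _ h]

/-- A symmetric idempotent `P` satisfies `∑ l, P i l ^ 2 = P i i`, which bounds its entries. -/
theorem abs_colProj_le_one {d k : ℕ} (V : Fin d → Fin k → ℝ) (i j : Fin d) :
    |colProj V i j| ≤ 1 := by
  have h : ∑ l, colProj V i l * colProj V i l = colProj V i i := by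
    conv_rhs => rw [← colProj_mul_self V, Matrix.mul_apply]
    refine Finset.sum_congr rfl fun l _ => ?_
    conv_lhs => rw [← colProj_transpose V]
    simp only [transpose_apply]
    rw [← transpose_apply (colProj V) i l, colProj_transpose]
  have key : ∀ l, colProj V i l * colProj V i l ≤ colProj V i i := fun l => by
    rw [← h]
    exact Finset.single_le_sum (f := fun l => colProj V i l * colProj V i l)
      (fun l _ => mul_self_nonneg _) (Finset.mem_univ l)
  have h1 : colProj V i i ≤ 1 := by nlinarith [key i]
  have := key j
  rw [abs_le]
  constructor <;> nlinarith

theorem measurable_colProj {d k : ℕ} (i j : Fin d) :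
    Measurable fun V : Fin d → Fin k → ℝ => colProj V i j := by
  have hc : Continuous fun V : Fin d → Fin k → ℝ => (of V)ᵀ * of V := by
    refine continuous_matrix fun a b => ?_
    simp only [Matrix.mul_apply, transpose_apply, of_apply]
    fun_prop
  have hi : ∀ a b, Measurable fun V : Fin d → Fin k → ℝ => ((of V)ᵀ * of V)⁻¹ a b := by
    intro a b
    have h : ∀ V : Fin d → Fin k → ℝ, ((of V)ᵀ * of V)⁻¹ a b
        = (((of V)ᵀ * of V).det)⁻¹ * ((of V)ᵀ * of V).adjugate a b := fun V => by
      rw [inv_def, Ring.inverse_eq_inv', Matrix.smul_apply, smul_eq_mul]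
    simp only [h]
    exact (hc.matrix_det.measurable.inv).mul (hc.matrix_adjugate.matrix_elem a b).measurable
  have hV : ∀ r c, Measurable fun V : Fin d → Fin k → ℝ => V r c := fun r c =>
    (measurable_pi_apply c).comp (measurable_pi_apply r)
  simp only [colProj_apply]
  exact Finset.measurable_sum _ fun b _ =>
    (Finset.measurable_sum _ fun a _ => (hV i a).mul (hi a b)).mul (hV j b)

/-! ### Invariance of the Gaussian law -/

/-- The law of a `d × k` matrix with i.i.d. `N(0, 1)` entries, as a measure on families of rows. -/
noncomputable abbrev stdGaussianMatrix (d k : ℕ) : Measure (Fin d → Fin k → ℝ) :=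
  Measure.pi fun _ : Fin d => Measure.pi fun _ : Fin k => gaussianReal 0 1

theorem integrable_colProj {d k : ℕ} (i j : Fin d) :
    Integrable (fun V => colProj V i j) (stdGaussianMatrix d k) :=
  Integrable.of_bound (measurable_colProj i j).aestronglyMeasurable 1
    (Filter.Eventually.of_forall fun V => abs_colProj_le_one V i j)

theorem measurePreserving_sign {d k : ℕ} (s : Fin d → ℝ) (hs : ∀ r, s r = 1 ∨ s r = -1) :
    MeasurePreserving (fun (V : Fin d → Fin k → ℝ) r c => s r * V r c)
      (stdGaussianMatrix d k) (stdGaussianMatrix d k) := by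
  refine measurePreserving_pi _ _ (f := fun r (v : Fin k → ℝ) c => s r * v c) fun r => ?_
  refine measurePreserving_pi _ _ (f := fun _ (x : ℝ) => s r * x) fun _ => ?_
  refine ⟨by fun_prop, ?_⟩
  rcases hs r with h | h <;> simp [h, gaussianReal_map_neg]

theorem measurePreserving_perm_s10 {d k : ℕ} (σ : Equiv.Perm (Fin d)) :
    MeasurePreserving (fun (V : Fin d → Fin k → ℝ) r => V (σ r))
      (stdGaussianMatrix d k) (stdGaussianMatrix d k) := by
  have := measurePreserving_piCongrLeft (α := fun _ : Fin d => Fin k → ℝ)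
    (fun _ : Fin d => Measure.pi fun _ : Fin k => gaussianReal 0 1) σ.symm
  convert this using 1
  ext V r c
  have := Equiv.piCongrLeft_apply_apply (fun _ : Fin d => Fin k → ℝ) σ.symm V (σ r)
  simp only [Equiv.symm_apply_apply] at this
  rw [MeasurableEquiv.coe_piCongrLeft, this]

theorem integral_colProj_of_ne {d k : ℕ} {i j : Fin d} (hij : i ≠ j) :
    ∫ V, colProj V i j ∂stdGaussianMatrix d k = 0 := by
  have hm := measurePreserving_sign (k := k) (fun r => if r = i then -1 else 1)
    (fun r => by by_cases h : r = i <;> simp [h])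
  have h : ∫ V, colProj V i j ∂stdGaussianMatrix d k
      = ∫ V, - colProj V i j ∂stdGaussianMatrix d k := by
    conv_lhs => rw [← hm.map_eq]
    rw [integral_map hm.measurable.aemeasurable (measurable_colProj i j).aestronglyMeasurable]
    refine integral_congr_ae (Filter.Eventually.of_forall fun V => ?_)
    simp only
    rw [colProj_sign _ _ (fun r => by by_cases h : r = i <;> simp [h])]
    simp [hij.symm]
  rw [integral_neg] at h
  linarith

theorem integral_colProj_diag_eq {d k : ℕ} (i j : Fin d) :
    ∫ V, colProj V i i ∂stdGaussianMatrix d k = ∫ V, colProj V j j ∂stdGaussianMatrix d k := by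
  have hm := measurePreserving_perm_s10 (k := k) (Equiv.swap i j)
  conv_lhs => rw [← hm.map_eq]
  rw [integral_map hm.measurable.aemeasurable (measurable_colProj i i).aestronglyMeasurable]
  simp [colProj_comp_perm]

/-! ### Almost sure full rank -/

/-- A proper subspace lies in the kernel of a nonzero functional `f`. Fixing all coordinates but
one on which `f` depends, the equation `f x = 0` determines that coordinate, and a Gaussian has no
atoms. -/
theorem ae_notMem_submodule {k : ℕ} (p : Submodule ℝ (Fin k → ℝ)) (hp : p ≠ ⊤) :
    ∀ᵐ x ∂(Measure.pi fun _ : Fin k => gaussianReal 0 1), x ∉ p := by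
  obtain ⟨f, hf, hpf⟩ := p.exists_le_ker_of_lt_top hp.lt_top
  obtain ⟨i, hi⟩ : ∃ i, f (Pi.single i 1) ≠ 0 := by
    by_contra! h
    exact hf (LinearMap.pi_ext' fun i => LinearMap.ext_ring (by simpa using h i))
  cases k with
  | zero => exact i.elim0
  | succ n =>
    have hm := measurePreserving_piFinSuccAbove (fun _ : Fin (n + 1) => gaussianReal 0 1) i
    suffices h : ∀ᵐ y ∂((gaussianReal 0 1).prod (Measure.pi fun _ : Fin n => gaussianReal 0 1)),
        f ((MeasurableEquiv.piFinSuccAbove (fun _ => ℝ) i).symm y) ≠ 0 by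
      filter_upwards [hm.quasiMeasurePreserving.ae h] with x hx hxp
      exact hx (by rw [MeasurableEquiv.symm_apply_apply]; exact hpf hxp)
    have hfm : Measurable f := f.continuous_of_finiteDimensional.measurable
    have hms : MeasurableSet {y : ℝ × (Fin n → ℝ) |
        f ((MeasurableEquiv.piFinSuccAbove (fun _ => ℝ) i).symm y) ≠ 0} :=
      (hfm.comp (MeasurableEquiv.measurable _)) (measurableSet_singleton 0).compl
    rw [Measure.ae_prod_iff_ae_ae hms, Measure.ae_ae_comm hms]
    refine Filter.Eventually.of_forall fun w => ?_
    have : ∀ᵐ t ∂gaussianReal 0 1,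
      t ∉ ({-(f (i.insertNth 0 w)) / f (Pi.single i 1)} : Set ℝ) := by
      have := nullSingletonClass_gaussianReal (μ := 0) (v := 1) one_ne_zero
      exact measure_eq_zero_iff_ae_notMem.1 (measure_singleton _)
    filter_upwards [this] with t ht h0
    apply ht
    have hdec : (MeasurableEquiv.piFinSuccAbove (fun _ => ℝ) i).symm (t, w)
        = t • Pi.single i (1 : ℝ) + i.insertNth (α := fun _ => ℝ) 0 w := by
      ext r
      refine Fin.succAboveCases i ?_ (fun r => ?_) r <;>
        simp [MeasurableEquiv.piFinSuccAbove, Fin.insertNthEquiv]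
    rw [hdec, map_add, map_smul, smul_eq_mul] at h0
    rw [Set.mem_singleton_iff, eq_div_iff hi]
    linarith

theorem gram_posDef {d k : Type*} [Fintype d] [Fintype k] (V : Matrix d k ℝ)
    (h : ∀ y, V *ᵥ y = 0 → y = 0) :
    (Vᵀ * V).PosDef := by
  rw [← conjTranspose_eq_transpose_of_trivial]
  refine PosDef.conjTranspose_mul_self _ fun x y hxy => ?_
  rw [← sub_eq_zero]
  apply h
  rw [mulVec_sub, sub_eq_zero]
  exact hxy

theorem eq_zero_of_gram {d k : Type*} [Fintype d] [Fintype k] [DecidableEq k] (V : Matrix d k ℝ)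
    (h : (Vᵀ * V).det ≠ 0) {y : k → ℝ} (hy : V *ᵥ y = 0) : y = 0 := by
  refine eq_zero_of_mulVec_eq_zero h ?_
  rw [← mulVec_mulVec, hy, mulVec_zero]

/-- A matrix whose rows span the whole space has trivial kernel. -/
theorem eq_zero_of_span {n k : ℕ} (V : Fin n → Fin k → ℝ)
    (h : Submodule.span ℝ (Set.range V) = ⊤) (y : Fin k → ℝ) (hy : of V *ᵥ y = 0) : y = 0 := by
  have : ∀ x ∈ Submodule.span ℝ (Set.range V), x ⬝ᵥ y = 0 := by
    intro x hx
    induction hx using Submodule.span_induction with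
    | mem x hx => obtain ⟨i, rfl⟩ := hx; exact congrFun hy i
    | zero => simp
    | add a b _ _ ha hb => rw [add_dotProduct, ha, hb, add_zero]
    | smul c a _ ha => rw [smul_dotProduct, ha, smul_zero]
  exact dotProduct_self_eq_zero.1 (this y (h ▸ Submodule.mem_top))

/-- Almost surely the `n × k` Gaussian matrix has maximal rank: its rows are independent or its
columns are (the latter expressed through the Gram determinant, which makes measurability clear).
The induction adds one row at a time: a new row preserves injectivity, and if the old rows
are independent without spanning, it almost surely avoids their span. -/
theorem ae_linearIndependent_or_gram {k : ℕ} (n : ℕ) :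
    ∀ᵐ V ∂stdGaussianMatrix n k, LinearIndependent ℝ V ∨ ((of V)ᵀ * of V).det ≠ 0 := by
  have hmeas : ∀ n, MeasurableSet {V : Fin n → Fin k → ℝ |
      LinearIndependent ℝ V ∨ ((of V)ᵀ * of V).det ≠ 0} := by
    intro n
    refine IsOpen.measurableSet (isOpen_setOfPred_linearIndependent.union ?_)
    have hc : Continuous fun V : Fin n → Fin k → ℝ => (of V)ᵀ * of V := by
      refine continuous_matrix fun a b => ?_
      simp only [Matrix.mul_apply, transpose_apply, of_apply]
      fun_prop
    exact isOpen_ne_fun hc.matrix_det continuous_const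
  induction n with
  | zero => exact Filter.Eventually.of_forall fun V => Or.inl linearIndependent_empty_type
  | succ n ih =>
    have hm := measurePreserving_piFinSuccAbove
      (fun _ : Fin (n + 1) => Measure.pi fun _ : Fin k => gaussianReal 0 1) 0
    suffices h : ∀ᵐ y ∂((Measure.pi fun _ : Fin k => gaussianReal 0 1).prod
          (stdGaussianMatrix n k)),
        LinearIndependent ℝ
          ((MeasurableEquiv.piFinSuccAbove (fun _ : Fin (n + 1) => Fin k → ℝ) 0).symm y) ∨
        ((of ((MeasurableEquiv.piFinSuccAbove (fun _ : Fin (n + 1) => Fin k → ℝ) 0).symm y))ᵀ *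
          of ((MeasurableEquiv.piFinSuccAbove (fun _ : Fin (n + 1) => Fin k → ℝ) 0).symm y)).det
            ≠ 0 by
      filter_upwards [hm.quasiMeasurePreserving.ae h] with x hx
      simpa only [MeasurableEquiv.symm_apply_apply] using hx
    have hms := (MeasurableEquiv.piFinSuccAbove
      (fun _ : Fin (n + 1) => Fin k → ℝ) 0).symm.measurable (hmeas (n + 1))
    refine (Measure.ae_prod_iff_ae_ae hms).2 ((Measure.ae_ae_comm (p := fun x W =>
      (MeasurableEquiv.piFinSuccAbove (fun _ : Fin (n + 1) => Fin k → ℝ) 0).symm (x, W) ∈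
        {V : Fin (n + 1) → Fin k → ℝ | LinearIndependent ℝ V ∨ ((of V)ᵀ * of V).det ≠ 0}) hms).2 ?_)
    filter_upwards [ih] with W hW
    have hcons : ∀ x, (MeasurableEquiv.piFinSuccAbove (fun _ : Fin (n + 1) => Fin k → ℝ) 0).symm
        (x, W) = Fin.cons x W := fun x => by
      simp [MeasurableEquiv.piFinSuccAbove, Fin.insertNthEquiv]
    simp only [hcons]
    have hinj : (∀ y, of W *ᵥ y = 0 → y = 0) → ∀ x : Fin k → ℝ,
        ((of (Fin.cons x W : Fin (n + 1) → Fin k → ℝ))ᵀ *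
          of (Fin.cons x W : Fin (n + 1) → Fin k → ℝ)).det ≠ 0 := by
      intro h x
      refine (gram_posDef _ fun y hy => h y ?_).det_pos.ne'
      ext i
      exact congrFun hy i.succ
    by_cases hspan : Submodule.span ℝ (Set.range W) = ⊤
    · exact Filter.Eventually.of_forall fun x => Or.inr (hinj (eq_zero_of_span W hspan) x)
    rcases hW with hW | hW
    · filter_upwards [ae_notMem_submodule _ hspan] with x hx
      exact Or.inl (linearIndependent_finCons.2 ⟨hW, hx⟩)
    · exact Filter.Eventually.of_forall fun x =>
        Or.inr (hinj (fun y => eq_zero_of_gram _ hW) x)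

theorem ae_gram_det_ne_zero {d k : ℕ} (hk : k ≤ d) :
    ∀ᵐ V ∂stdGaussianMatrix d k, ((of V)ᵀ * of V).det ≠ 0 := by
  filter_upwards [ae_linearIndependent_or_gram (k := k) d] with V hV
  rcases hV with hV | hV
  -- Since `k ≤ d`, independence of the `d` rows forces `d = k`, so the rows form a basis.
  · have hc := hV.fintype_card_le_finrank
    have : Submodule.span ℝ (Set.range V) = ⊤ :=
      hV.span_eq_top_of_card_eq_finrank' (by simp at hc ⊢; omega)
    exact (gram_posDef _ (eq_zero_of_span V this)).det_pos.ne'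
  · exact hV

/-! ### Expectation of the projection -/

theorem integral_colProj_diag {d k : ℕ} (hk : k ≤ d) (i : Fin d) :
    ∫ V, colProj V i i ∂stdGaussianMatrix d k = k / d := by
  have hd : (d : ℝ) ≠ 0 := by
    have := i.pos
    positivity
  have h1 : ∑ j, ∫ V, colProj V j j ∂stdGaussianMatrix d k = k := by
    rw [← integral_finsetSum _ fun j _ => integrable_colProj j j]
    have : ∀ᵐ V ∂stdGaussianMatrix d k, ∑ j, colProj V j j = k := by
      filter_upwards [ae_gram_det_ne_zero hk] with V hV
      change (colProj V).trace = k
      rw [colProj, trace_mul_comm, ← Matrix.mul_assoc, mul_nonsing_inv _ hV.isUnit, trace_one,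
        Fintype.card_fin]
    rw [integral_congr_ae this]
    simp
  rw [Finset.sum_congr rfl fun j _ => integral_colProj_diag_eq j i] at h1
  rw [eq_div_iff hd, ← h1]
  simp [mul_comm]

theorem integrable_trace_mul_colProj {d k : ℕ} (E : Matrix (Fin d) (Fin d) ℝ) :
    Integrable (fun V => (E * colProj V).trace) (stdGaussianMatrix d k) := by
  simp only [trace, diag_apply, Matrix.mul_apply]
  exact integrable_finsetSum _ fun i _ => integrable_finsetSum _ fun j _ =>
    (integrable_colProj j i).const_mul _

theorem integral_trace_mul_colProj {d k : ℕ} (hk : k ≤ d) (E : Matrix (Fin d) (Fin d) ℝ) :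
    ∫ V, (E * colProj V).trace ∂stdGaussianMatrix d k = k / d * E.trace := by
  simp only [trace, diag_apply, Matrix.mul_apply]
  have hij : ∀ i j, Integrable (fun V => E i j * colProj V j i) (stdGaussianMatrix d k) :=
    fun i j => (integrable_colProj j i).const_mul _
  rw [integral_finsetSum Finset.univ (f := fun i V => ∑ j, E i j * colProj V j i)
    fun i _ => integrable_finsetSum _ fun j _ => hij i j, Finset.mul_sum]
  refine Finset.sum_congr rfl fun i _ => ?_
  rw [integral_finsetSum Finset.univ (f := fun j V => E i j * colProj V j i) fun j _ => hij i j,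
    Finset.sum_eq_single i]
  · rw [integral_const_mul, integral_colProj_diag hk, mul_comm]
  · intro j _ hj
    rw [integral_const_mul, integral_colProj_of_ne hj, mul_zero]
  · simp

/-! ### One step of block DFP -/

/-- With `K = V (Vᵀ A V)⁻¹ Vᵀ` one has `K A K = K`, hence
`(1 - K A) A⁻¹ (1 - A K) = A⁻¹ - K`. -/
theorem trace_blockDFP {d k : ℕ} (A G : Matrix (Fin d) (Fin d) ℝ) (V : Matrix (Fin d) (Fin k) ℝ)
    (hA : IsUnit A.det) (hM : IsUnit (Vᵀ * A * V).det) :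
    (A⁻¹ * ((A * V * (Vᵀ * A * V)⁻¹ * Vᵀ * A +
        (1 - A * V * (Vᵀ * A * V)⁻¹ * Vᵀ) * G * (1 - V * (Vᵀ * A * V)⁻¹ * Vᵀ * A)) - A)).trace
      = (A⁻¹ * (G - A)).trace - ((G - A) * (V * (Vᵀ * A * V)⁻¹ * Vᵀ)).trace := by
  set K := V * (Vᵀ * A * V)⁻¹ * Vᵀ with hK
  have hKAK : K * A * K = K := by
    have : K * A * K = V * ((Vᵀ * A * V)⁻¹ * (Vᵀ * A * V)) * (Vᵀ * A * V)⁻¹ * Vᵀ := by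
      simp only [hK, Matrix.mul_assoc]
    rw [this, nonsing_inv_mul _ hM, Matrix.mul_one]
  have e1 : A * V * (Vᵀ * A * V)⁻¹ * Vᵀ = A * K := by simp only [hK, Matrix.mul_assoc]
  rw [e1]
  have hcong : (1 - K * A) * A⁻¹ * (1 - A * K) = A⁻¹ - K := by
    have h1 : (1 - K * A) * A⁻¹ = A⁻¹ - K := by
      rw [Matrix.sub_mul, Matrix.one_mul, Matrix.mul_assoc, mul_nonsing_inv _ hA, Matrix.mul_one]
    rw [h1, Matrix.mul_sub, Matrix.mul_one, Matrix.sub_mul, ← Matrix.mul_assoc,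
      nonsing_inv_mul _ hA, Matrix.one_mul, ← Matrix.mul_assoc, hKAK, sub_self, sub_zero]
  have h2 : (A⁻¹ * ((1 - A * K) * G * (1 - K * A))).trace = ((A⁻¹ - K) * G).trace := by
    rw [← hcong, ← Matrix.mul_assoc, trace_mul_comm]
    simp only [Matrix.mul_assoc]
  have h3 : A⁻¹ * (A * K * A) = K * A := by
    rw [Matrix.mul_assoc A, ← Matrix.mul_assoc, nonsing_inv_mul _ hA, Matrix.one_mul]
  rw [Matrix.mul_sub, Matrix.mul_add, trace_sub, trace_add, h2, h3, Matrix.sub_mul, Matrix.sub_mul,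
    Matrix.mul_sub, trace_sub, trace_sub, trace_sub, trace_mul_comm G K, trace_mul_comm A K]
  ring

/-- **Theorem 5.3 (block DFP part)**: for the randomized block DFP update with
Gaussian directions, `E[σ_A(G₊)] ≤ (1 − k/(dκ))·σ_A(G)` where
`σ_A(G) = tr(A⁻¹(G − A))` and `κ = L/μ`. -/
theorem blockDFP_sigma_decrease {d k : ℕ} (hd : 0 < d) (hk : k ≤ d)
    (A G : Matrix (Fin d) (Fin d) ℝ) (hA : A.PosDef) (hG : G.PosDef)
    (hGA : (G - A).PosSemidef)
    (μ L : ℝ) (hμ : 0 < μ) (hμL : μ ≤ L)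
    (hAμ : (A - μ • (1 : Matrix (Fin d) (Fin d) ℝ)).PosSemidef)
    (hAL : (L • (1 : Matrix (Fin d) (Fin d) ℝ) - A).PosSemidef)
    {Ω : Type*} [MeasureSpace Ω] [IsProbabilityMeasure (ℙ : Measure Ω)]
    (U : Ω → Matrix (Fin d) (Fin k) ℝ)
    (hU : Measure.map (fun ω => fun i j => U ω i j) ℙ =
      Measure.pi fun _ : Fin d => Measure.pi fun _ : Fin k => gaussianReal 0 1) :
    (∫ ω,
        (A⁻¹ *
          ((A * U ω * ((U ω)ᵀ * A * U ω)⁻¹ * (U ω)ᵀ * A +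
            (1 - A * U ω * ((U ω)ᵀ * A * U ω)⁻¹ * (U ω)ᵀ) * G *
              (1 - U ω * ((U ω)ᵀ * A * U ω)⁻¹ * (U ω)ᵀ * A)) - A)).trace ∂ℙ) ≤
      (1 - (k : ℝ) / (d * (L / μ))) * (A⁻¹ * (G - A)).trace := by
  have hL : 0 < L := hμ.trans_le hμL
  have hd' : (0 : ℝ) < d := by exact_mod_cast hd
  have hAdet : IsUnit A.det := (isUnit_iff_isUnit_det A).1 hA.isUnit
  set E := G - A with hE
  set W : Ω → Fin d → Fin k → ℝ := fun ω i j => U ω i j with hW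
  -- A map that is not a.e. measurable would push `ℙ` forward to the zero measure.
  have hWm : AEMeasurable W ℙ := by
    refine aemeasurable_of_map_neZero ⟨?_⟩
    rw [hU]
    exact IsProbabilityMeasure.ne_zero _
  have hEint : Integrable (fun ω => (E * colProj (W ω)).trace) ℙ := by
    have := integrable_trace_mul_colProj (k := k) E
    rw [stdGaussianMatrix, ← hU] at this
    exact this.comp_aemeasurable hWm
  have hval : ∫ ω, (E * colProj (W ω)).trace ∂ℙ = k / d * E.trace := by
    have h := integral_trace_mul_colProj hk E
    have hi := (integrable_trace_mul_colProj (k := k) E).aestronglyMeasurable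
    rw [stdGaussianMatrix, ← hU] at h hi
    rw [← h, integral_map hWm hi]
  have hgram : ∀ᵐ ω ∂(ℙ : Measure Ω), ((U ω)ᵀ * U ω).det ≠ 0 := by
    have h := ae_gram_det_ne_zero hk
    rw [stdGaussianMatrix, ← hU] at h
    exact ae_of_ae_map hWm h
  have hpt : ∀ᵐ ω ∂(ℙ : Measure Ω),
      ((U ω)ᵀ * A * U ω).PosDef ∧ ((U ω)ᵀ * U ω).PosDef := by
    filter_upwards [hgram] with ω hω
    have hinj : Function.Injective (U ω).mulVec := fun x y hxy => by
      rw [← sub_eq_zero]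
      refine eq_zero_of_gram (U ω) hω ?_
      rw [mulVec_sub, sub_eq_zero]
      exact hxy
    refine ⟨?_, gram_posDef _ fun y => eq_zero_of_gram (U ω) hω⟩
    simpa using hA.conjTranspose_mul_mul_same hinj
  have htr : μ * (A⁻¹ * E).trace ≤ E.trace := by
    have h1 : ((μ • (1 : Matrix (Fin d) (Fin d) ℝ))⁻¹ - A⁻¹).PosSemidef :=
      posSemidef_inv_sub_inv_s10 hA (PosDef.one.smul hμ) hAμ
    have h2 : (μ • (1 : Matrix (Fin d) (Fin d) ℝ))⁻¹ = μ⁻¹ • 1 := by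
      apply inv_eq_left_inv
      simp [smul_smul, hμ.ne']
    rw [h2] at h1
    have h3 := trace_mul_nonneg_of_posSemidef h1 hGA
    rw [Matrix.sub_mul, trace_sub, smul_mul_assoc, Matrix.one_mul, trace_smul, smul_eq_mul,
      sub_nonneg, inv_mul_eq_div, le_div_iff₀ hμ] at h3
    linarith
  calc _ ≤ ∫ ω, ((A⁻¹ * E).trace - L⁻¹ * (E * colProj (W ω)).trace) ∂ℙ := by
        refine integral_mono_of_nonneg ?_ ((integrable_const _).sub (hEint.const_mul _)) ?_
        · filter_upwards [hpt] with ω ⟨hM, _⟩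
          have hMd := (isUnit_iff_isUnit_det _).1 hM.isUnit
          simp only [Pi.zero_apply]
          rw [trace_blockDFP A G (U ω) hAdet hMd, trace_mul_comm, ← trace_sub, ← Matrix.mul_sub]
          refine trace_mul_nonneg_of_posSemidef hGA ?_
          -- `A⁻¹ - U M⁻¹ Uᵀ ⪰ 0` is Schur-equivalent to `M - Uᵀ A U = 0 ⪰ 0`.
          refine (posSemidef_schur_swap (U ω) hA.inv hM).1 ?_
          rw [nonsing_inv_nonsing_inv _ hAdet, sub_self]
          exact PosSemidef.zero
        · filter_upwards [hpt] with ω ⟨hM, hN⟩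
          have hMd := (isUnit_iff_isUnit_det _).1 hM.isUnit
          have hNd := (isUnit_iff_isUnit_det _).1 hN.isUnit
          rw [trace_blockDFP A G (U ω) hAdet hMd]
          refine sub_le_sub_left ?_ _
          have h1 : (L • ((U ω)ᵀ * U ω) - (U ω)ᵀ * A * U ω).PosSemidef := by
            have := hAL.conjTranspose_mul_mul_same (U ω)
            simpa [Matrix.mul_sub, Matrix.sub_mul] using this
          have h2 := posSemidef_inv_sub_inv_s10 (hN.smul hL) hM h1
          have h3 : (L • ((U ω)ᵀ * U ω))⁻¹ = L⁻¹ • ((U ω)ᵀ * U ω)⁻¹ := by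
            apply inv_eq_left_inv
            simp [smul_smul, hL.ne', nonsing_inv_mul _ hNd]
          rw [h3] at h2
          have h4 := h2.mul_mul_conjTranspose_same (U ω)
          rw [conjTranspose_eq_transpose_of_trivial, Matrix.mul_sub, Matrix.sub_mul,
            Matrix.mul_smul, Matrix.smul_mul] at h4
          have h5 := trace_mul_nonneg_of_posSemidef hGA h4
          rw [Matrix.mul_sub E, trace_sub, Matrix.mul_smul, trace_smul, smul_eq_mul] at h5
          have h6 : colProj (W ω) = U ω * ((U ω)ᵀ * U ω)⁻¹ * (U ω)ᵀ := rfl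
          rw [h6]
          linarith
    _ = (A⁻¹ * E).trace - L⁻¹ * (k / d * E.trace) := by
        rw [integral_sub (integrable_const _) (hEint.const_mul _), integral_const_mul, hval]
        simp
    _ ≤ (A⁻¹ * E).trace - L⁻¹ * (k / d * (μ * (A⁻¹ * E).trace)) := by gcongr
    _ = _ := by
        field_simp
end
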